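/- arXiv:2405.13682 — 3 statements merged into one kernel-verified Lean document; each statement's English description precedes it below -/
import Mathlib

section
/- Let G := Aff(m) = GL(m,ℝ) ⋉ ℝᵐ be the affine group acting on ℝᵐ by (L,t)·x = Lx + t, and let π : G → U(L²(ℝᵐ)) be the quasi-regular representation defined by π_{(L,t)}[f](x) := |det L|^{−1/2} f(L⁻¹(x − t)) for f ∈ L²(ℝᵐ). Then π is an irreducible unitary representation: its only closed invariant subspaces are {0} and L²(ℝᵐ). -/
open MeasureTheory Matrix

open scoped FourierTransform SchwartzMap ContDiff

section aux

variable {E : Type*} [NormedAddCommGroup E] [InnerProductSpace ℝ E] [FiniteDimensional ℝ E]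
  [MeasurableSpace E] [BorelSpace E]

theorem aux_unique {k l : E → ℂ} (hk : LocallyIntegrable k volume)
    (hl : LocallyIntegrable l volume)
    (h : ∀ φ : 𝓢(E, ℂ), ∫ x, φ x • k x = ∫ x, φ x • l x) : k =ᵐ[volume] l := by
  apply ae_eq_of_integral_contDiff_smul_eq hk hl
  intro g g_smooth g_cpt
  have hg₁ : HasCompactSupport (Complex.ofRealCLM ∘ g) := g_cpt.comp_left rfl
  have hg₂ : ContDiff ℝ ∞ (Complex.ofRealCLM ∘ g) := by fun_prop
  simpa using h (hg₁.toSchwartzMap hg₂)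

theorem aux_pair (f : Lp ℂ 2 (volume : Measure E)) (φ : 𝓢(E, ℂ)) :
    ∫ x, φ x • (𝓕 f : Lp ℂ 2 (volume : Measure E)) x = ∫ x, (𝓕 φ) x • f x := by
  have := congrArg (fun T => T φ) (Lp.fourier_toTemperedDistribution_eq f)
  simp only [TemperedDistribution.fourier_apply, Lp.toTemperedDistribution_apply] at this
  exact this.symm

/-- Fourier uniqueness in `L¹`. -/
theorem aux_L1 {k : E → ℂ} (hk : Integrable k volume)
    (h : ∀ s : E, ∫ x, ((𝐞 (inner ℝ x s) : Circle) : ℂ) * k x = 0) : k =ᵐ[volume] 0 := by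
  have h0 : 𝓕 k = 0 := by
    ext s
    rw [Real.fourier_eq]
    have := h (-s)
    simpa [Circle.smul_def] using this
  apply aux_unique hk.locallyIntegrable (integrable_zero _ _ _).locallyIntegrable
  intro φ
  have := VectorFourier.integral_fourierIntegral_smul_eq_flip (L := innerₗ E) (μ := volume)
    (ν := volume) Real.continuous_fourierChar continuous_inner (𝓕⁻ φ).integrable hk
  simp only [flip_innerₗ] at this
  have e1 : VectorFourier.fourierIntegral 𝐞 volume (innerₗ E) k = 0 := h0
  have e2 : VectorFourier.fourierIntegral 𝐞 volume (innerₗ E) (𝓕⁻ φ : 𝓢(E, ℂ)) = φ := by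
    change 𝓕 ((𝓕⁻ φ : 𝓢(E, ℂ)) : E → ℂ) = φ
    rw [← SchwartzMap.fourier_coe]; simp
  rw [e1, e2] at this
  simpa using this

/-- Change of variables. -/
theorem aux_cov (A : E ≃L[ℝ] E) : ∃ c : ℝ, 0 < c ∧ (∀ F : E → ℂ, ∫ x, F (A x) = c * ∫ x, F x) ∧
    (volume : Measure E).map A = ENNReal.ofReal c • volume := by
  have hdet : LinearMap.det (A.toLinearEquiv : E →ₗ[ℝ] E) ≠ 0 :=
    (LinearEquiv.isUnit_det' A.toLinearEquiv).ne_zero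
  have hmap : (volume : Measure E).map A = ENNReal.ofReal
      |(LinearMap.det (A.toLinearEquiv : E →ₗ[ℝ] E))⁻¹| • volume :=
    Measure.map_linearMap_addHaar_eq_smul_addHaar volume hdet
  refine ⟨|(LinearMap.det (A.toLinearEquiv : E →ₗ[ℝ] E))⁻¹|, by positivity, ?_, hmap⟩
  intro F
  have := (A.toHomeomorph.measurableEmbedding).integral_map (μ := volume) F
  change ∫ y, F y ∂(volume.map A) = ∫ x, F (A x) at this
  rw [← this, hmap, integral_smul_measure, ENNReal.toReal_ofReal (abs_nonneg _)]
  simp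

theorem aux_memLp (A : E ≃L[ℝ] E) {f : E → ℂ} (hf : MemLp f 2 volume) :
    MemLp (fun x => f (A x)) 2 volume := by
  obtain ⟨c, hc, -, hm⟩ := aux_cov A
  refine MemLp.comp_of_map (f := A) ?_ A.continuous.measurable.aemeasurable
  rw [hm]
  exact hf.smul_measure ENNReal.ofReal_ne_top

/-- Fourier transform of a dilation. -/
theorem aux_dil (A : E ≃L[ℝ] E) (hA : ∀ x y, inner ℝ (A x) y = inner ℝ x (A y))
    (f h : Lp ℂ 2 (volume : Measure E)) (hh : h =ᵐ[volume] fun x => f (A x)) :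
    ∃ c : ℝ, 0 < c ∧ (𝓕 h : Lp ℂ 2 (volume : Measure E)) =ᵐ[volume]
      fun x => (c : ℂ) * (𝓕 f : Lp ℂ 2 (volume : Measure E)) (A.symm x) := by
  obtain ⟨c, hc, hcov, -⟩ := aux_cov A
  refine ⟨c, hc, aux_unique ((Lp.memLp _).locallyIntegrable (by norm_num))
    (((aux_memLp A.symm (Lp.memLp _)).const_mul (c : ℂ)).locallyIntegrable (by norm_num)) ?_⟩
  intro φ
  set ψ : 𝓢(E, ℂ) := SchwartzMap.compCLMOfContinuousLinearEquiv ℂ A φ with hψ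
  have hψx : ∀ x, ψ x = φ (A x) := fun x => rfl
  have key : ∀ x, (c : ℂ) * (𝓕 φ) (A.symm x) = (𝓕 ψ) x := by
    intro x
    rw [SchwartzMap.fourier_coe, SchwartzMap.fourier_coe, Real.fourier_eq, Real.fourier_eq]
    rw [← hcov (fun v => 𝐞 (-inner ℝ v (A.symm x)) • φ v)]
    congr 1
    ext v
    rw [hA, A.apply_symm_apply, hψx]
  rw [aux_pair]
  calc ∫ x, (𝓕 φ) x • h x = ∫ x, (𝓕 φ) (A.symm (A x)) • f (A x) := by
        apply integral_congr_ae
        filter_upwards [hh] with x hx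
        simp [hx]
    _ = c * ∫ x, (𝓕 φ) (A.symm x) • f x := hcov (fun x => (𝓕 φ) (A.symm x) • f x)
    _ = ∫ x, (𝓕 ψ) x • f x := by
        simp_rw [← key, smul_eq_mul, mul_assoc, integral_const_mul]
    _ = ∫ x, ψ x • (𝓕 f : Lp ℂ 2 (volume : Measure E)) x := by rw [aux_pair]
    _ = ∫ x, φ (A x) • (𝓕 f : Lp ℂ 2 (volume : Measure E)) (A.symm (A x)) := by
        simp [hψx]
    _ = c * ∫ x, φ x • (𝓕 f : Lp ℂ 2 (volume : Measure E)) (A.symm x) :=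
        hcov (fun x => φ x • (𝓕 f : Lp ℂ 2 (volume : Measure E)) (A.symm x))
    _ = _ := by
        rw [← integral_const_mul]
        congr 1; ext x; simp only [smul_eq_mul]; ring

/-- Fourier transform of a translation. -/
theorem aux_trans (s : E)
    (f h : Lp ℂ 2 (volume : Measure E)) (hh : h =ᵐ[volume] fun x => f (x + s)) :
    (𝓕 h : Lp ℂ 2 (volume : Measure E)) =ᵐ[volume]
      fun x => ((𝐞 (inner ℝ x s) : Circle) : ℂ) * (𝓕 f : Lp ℂ 2 (volume : Measure E)) x := by
  have hm : MemLp (fun x => ((𝐞 (inner ℝ x s) : Circle) : ℂ) * (𝓕 f : Lp ℂ 2 (volume : Measure E)) x) 2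
      volume := by
    refine (Lp.memLp (𝓕 f : Lp ℂ 2 (volume : Measure E))).of_le ?_ ?_
    · refine AEStronglyMeasurable.mul ?_ (Lp.memLp _).1
      have : Continuous fun x : E => ((𝐞 (inner ℝ x s) : Circle) : ℂ) := by
        have := Real.continuous_fourierChar
        fun_prop
      exact this.aestronglyMeasurable
    · exact Filter.Eventually.of_forall fun x => by rw [norm_mul, Circle.norm_coe, one_mul]
  refine aux_unique ((Lp.memLp _).locallyIntegrable (by norm_num))
    (hm.locallyIntegrable (by norm_num)) ?_
  intro φ
  set χ : 𝓢(E, ℂ) := SchwartzMap.compSubConstCLM ℂ s (𝓕 φ) with hχ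
  have hχx : ∀ x, χ x = (𝓕 φ) (x - s) := fun x => by simp [hχ]
  have key : ∀ v, (𝓕⁻ χ) v = ((𝐞 (inner ℝ v s) : Circle) : ℂ) * φ v := by
    intro v
    have h2 : (𝓕⁻ (𝓕 φ)) v = φ v := by simp
    rw [← h2]
    rw [SchwartzMap.fourierInv_coe, SchwartzMap.fourierInv_coe, Real.fourierInv_eq,
      Real.fourierInv_eq, ← integral_const_mul]
    refine Eq.trans ?_ (integral_sub_right_eq_self (fun x => ((𝐞 (inner ℝ v s) : Circle) : ℂ) *
        (𝐞 (inner ℝ x v) • (𝓕 φ : 𝓢(E, ℂ)) x)) s)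
    congr 1
    ext x
    simp only [hχx, Circle.smul_def, smul_eq_mul, ← mul_assoc]
    rw [← Circle.coe_mul, ← AddChar.map_add_eq_mul, inner_sub_left, real_inner_comm v s]
    congr 4
    ring
  rw [aux_pair]
  calc ∫ x, (𝓕 φ) x • h x = ∫ x, (𝓕 φ) ((x + s) - s) • f (x + s) := by
        apply integral_congr_ae
        filter_upwards [hh] with x hx
        simp [hx]
    _ = ∫ x, (𝓕 φ) (x - s) • f x :=
        integral_add_right_eq_self (fun x => (𝓕 φ) (x - s) • f x) s
    _ = ∫ x, (𝓕 (𝓕⁻ χ)) x • f x := by simp [hχx]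
    _ = ∫ x, (𝓕⁻ χ) x • (𝓕 f : Lp ℂ 2 (volume : Measure E)) x := by rw [aux_pair]
    _ = _ := by
        congr 1; ext x; rw [key]; simp only [smul_eq_mul]; ring


/-- Orthogonality of all translates of `h` to `g` forces disjoint Fourier supports. -/
theorem aux_orth (h g : Lp ℂ 2 (volume : Measure E))
    (H : ∀ s : E, ∫ x, starRingEnd ℂ (g x) * h (x + s) = 0) :
    ∀ᵐ x, (𝓕 g : Lp ℂ 2 (volume : Measure E)) x = 0 ∨
      (𝓕 h : Lp ℂ 2 (volume : Measure E)) x = 0 := by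
  have hint : Integrable (fun x => starRingEnd ℂ ((𝓕 g : Lp ℂ 2 (volume : Measure E)) x) *
      (𝓕 h : Lp ℂ 2 (volume : Measure E)) x) volume := by
    have := L2.integrable_inner (𝕜 := ℂ) (𝓕 g : Lp ℂ 2 (volume : Measure E))
      (𝓕 h : Lp ℂ 2 (volume : Measure E))
    refine this.congr (Filter.Eventually.of_forall fun x => ?_)
    simp [mul_comm]
  have := aux_L1 hint ?_
  · filter_upwards [this] with x hx
    simpa using hx
  intro s
  have hmp : MeasurePreserving (fun x : E => x + s) volume volume :=
    measurePreserving_add_right volume s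
  set hs := Lp.compMeasurePreserving (fun x : E => x + s) hmp h with hhs
  have hse : hs =ᵐ[volume] fun x => h (x + s) := Lp.coeFn_compMeasurePreserving h hmp
  have h1 : inner ℂ (𝓕 g : Lp ℂ 2 (volume : Measure E)) (𝓕 hs) = (0 : ℂ) := by
    rw [Lp.inner_fourier_eq, L2.inner_def, ← H s]
    apply integral_congr_ae
    filter_upwards [hse] with x hx
    rw [hx]; simp [mul_comm]
  rw [L2.inner_def] at h1
  rw [← h1]
  apply integral_congr_ae
  filter_upwards [aux_trans s h hs hse] with x hx
  rw [hx]; simp; ring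

end aux

noncomputable section aux2

variable {m : ℕ}

/-- The diagonal dilation. -/
def dil (a : EuclideanSpace ℝ (Fin m)) (ha : ∀ i, a i ≠ 0) :
    EuclideanSpace ℝ (Fin m) ≃L[ℝ] EuclideanSpace ℝ (Fin m) :=
  LinearEquiv.toContinuousLinearEquiv
    { toFun := fun x => WithLp.toLp 2 fun i => a i * x i
      invFun := fun x => WithLp.toLp 2 fun i => (a i)⁻¹ * x i
      map_add' := fun x y => by ext i; simp [mul_add]
      map_smul' := fun r x => by ext i; simp; ring
      left_inv := fun x => by ext i; simp [ha i]
      right_inv := fun x => by ext i; simp [ha i] }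

theorem dil_apply (a : EuclideanSpace ℝ (Fin m)) (ha : ∀ i, a i ≠ 0) (x) :
    dil a ha x = WithLp.toLp 2 fun i => a i * x i := rfl

theorem dil_symm_apply (a : EuclideanSpace ℝ (Fin m)) (ha : ∀ i, a i ≠ 0) (x) :
    (dil a ha).symm x = WithLp.toLp 2 fun i => (a i)⁻¹ * x i := rfl

theorem ae_ne : ∀ᵐ x : EuclideanSpace ℝ (Fin m), ∀ i, x i ≠ 0 := by
  rw [ae_all_iff]
  intro i
  have h : ∀ᵐ y : Fin m → ℝ, y i ≠ 0 := by
    have h0 : ∀ᵐ r : ℝ, r ≠ 0 := by simp [ae_iff]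
    exact (Measure.tendsto_eval_ae_ae (μ := fun _ : Fin m => (volume : Measure ℝ)) (i := i)).eventually h0
  exact (PiLp.volume_preserving_ofLp (Fin m)).quasiMeasurePreserving.ae h

theorem aux_fubini {F G : EuclideanSpace ℝ (Fin m) → ℂ} (hF : Measurable F) (hG : Measurable G)
    (H : ∀ b : EuclideanSpace ℝ (Fin m), (∀ i, b i ≠ 0) →
      ∀ᵐ x : EuclideanSpace ℝ (Fin m), G x = 0 ∨ F (WithLp.toLp 2 fun i => b i * x i) = 0)
    (hG0 : ¬ G =ᵐ[volume] 0) : F =ᵐ[volume] 0 := by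
  have h1 : ∀ᵐ b : EuclideanSpace ℝ (Fin m), ∀ᵐ x : EuclideanSpace ℝ (Fin m),
      G x = 0 ∨ F (WithLp.toLp 2 fun i => b i * x i) = 0 := by
    filter_upwards [ae_ne] with b hb using H b hb
  have hms : MeasurableSet {p : EuclideanSpace ℝ (Fin m) × EuclideanSpace ℝ (Fin m) |
      G p.2 = 0 ∨ F (WithLp.toLp 2 fun i => p.1 i * p.2 i) = 0} := by
    have hc : Continuous fun p : EuclideanSpace ℝ (Fin m) × EuclideanSpace ℝ (Fin m) =>
      (WithLp.toLp 2 fun i => p.1 i * p.2 i : EuclideanSpace ℝ (Fin m)) := by fun_prop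
    exact ((hG.comp measurable_snd) (measurableSet_singleton 0)).union
      ((hF.comp hc.measurable) (measurableSet_singleton 0))
  have h2 := (Measure.ae_ae_comm hms).1 h1
  by_contra hF0
  apply hG0
  filter_upwards [h2, ae_ne] with x hx hx0
  by_contra hGx
  apply hF0
  have h3 : ∀ᵐ b : EuclideanSpace ℝ (Fin m), F (dil x hx0 b) = 0 := by
    filter_upwards [hx] with b hb
    rcases hb with hb | hb
    · exact absurd hb hGx
    · rw [dil_apply]; simpa only [mul_comm] using hb
  obtain ⟨c, hc, -, hmap⟩ := aux_cov (dil x hx0)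
  have h4 : ∀ᵐ y ∂(volume.map (dil x hx0)), F y = 0 :=
    (ae_map_iff (dil x hx0).continuous.measurable.aemeasurable
      (hF (measurableSet_singleton 0))).2 h3
  rw [hmap] at h4
  have hc0 : ENNReal.ofReal c ≠ 0 := by simpa using hc
  exact (Measure.absolutelyContinuous_smul hc0).ae_le h4

end aux2

/-- Let `G = Aff(m) = GL(m,ℝ) ⋉ ℝᵐ` act on `ℝᵐ` by `(L,t)·x = Lx + t`,
and let `π` be the quasi-regular representation on `L²(ℝᵐ)`,
`π_{(L,t)}[f](x) = |det L|^{-1/2} f(L⁻¹(x - t))`.  Then `π` is irreducible: its only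
closed invariant subspaces are `{0}` and `L²(ℝᵐ)`. -/
theorem statement8 (m : ℕ)
    (V : Submodule ℂ (Lp ℂ 2 (volume : Measure (Fin m → ℝ))))
    (hclosed : IsClosed (V : Set (Lp ℂ 2 (volume : Measure (Fin m → ℝ)))))
    (hinv : ∀ (L : GL (Fin m) ℝ) (t : Fin m → ℝ)
      (f h : Lp ℂ 2 (volume : Measure (Fin m → ℝ))), f ∈ V →
      (⇑h =ᵐ[volume] fun x =>
        (|((↑L : Matrix (Fin m) (Fin m) ℝ)).det| ^ (-(1 / 2 : ℝ)) : ℝ) •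
          f ((↑L⁻¹ : Matrix (Fin m) (Fin m) ℝ) *ᵥ (x - t))) →
      h ∈ V) :
    V = ⊥ ∨ V = ⊤ := by
  by_cases hV : V = ⊤
  · exact Or.inr hV
  left
  have : CompleteSpace V := hclosed.completeSpace_coe
  have hVo : Vᗮ ≠ ⊥ := fun h => hV (Submodule.orthogonal_eq_bot_iff.1 h)
  obtain ⟨g, hgV, hg0⟩ := Submodule.exists_mem_ne_zero_of_ne_bot hVo
  rw [Submodule.eq_bot_iff]
  intro f hf
  have he := PiLp.volume_preserving_ofLp (Fin m)
  have he' := PiLp.volume_preserving_toLp (Fin m)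
  set f' := Lp.compMeasurePreserving _ he f with hf'
  set g' := Lp.compMeasurePreserving _ he g with hg'
  have hfe : f' =ᵐ[volume] fun x => f (WithLp.ofLp x) := Lp.coeFn_compMeasurePreserving f he
  have hge : g' =ᵐ[volume] fun x => g (WithLp.ofLp x) := Lp.coeFn_compMeasurePreserving g he
  have hg'0 : (𝓕 g' : Lp ℂ 2 (volume : Measure (EuclideanSpace ℝ (Fin m)))) ≠ 0 := by
    rw [← norm_ne_zero_iff, Lp.norm_fourier_eq, hg', Lp.norm_compMeasurePreserving]
    exact norm_ne_zero_iff.2 hg0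
  suffices hF : (𝓕 f' : Lp ℂ 2 (volume : Measure (EuclideanSpace ℝ (Fin m)))) = 0 by
    rw [← norm_eq_zero, Lp.norm_fourier_eq, hf', Lp.norm_compMeasurePreserving] at hF
    exact norm_eq_zero.1 hF
  rw [Lp.eq_zero_iff_ae_eq_zero]
  refine aux_fubini (G := (𝓕 g' : Lp ℂ 2 (volume : Measure (EuclideanSpace ℝ (Fin m)))))
    (Lp.stronglyMeasurable _).measurable (Lp.stronglyMeasurable _).measurable ?_
    (fun h => hg'0 (Lp.eq_zero_iff_ae_eq_zero.2 h))
  intro b hb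
  set a : EuclideanSpace ℝ (Fin m) := WithLp.toLp 2 fun i => (b i)⁻¹ with ha_def
  have hai : ∀ i, a i = (b i)⁻¹ := fun i => rfl
  have ha : ∀ i, a i ≠ 0 := fun i => inv_ne_zero (hb i)
  set A := dil a ha with hA
  set fa := (aux_memLp A (Lp.memLp f')).toLp with hfa
  have hfae : fa =ᵐ[volume] fun x => f' (A x) := MemLp.coeFn_toLp _
  have hAsa : ∀ x y, inner ℝ (A x) y = inner ℝ x (A y) := by
    intro x y
    simp only [hA, dil_apply, PiLp.inner_apply]
    refine Finset.sum_congr rfl fun i _ => ?_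
    simp; ring
  obtain ⟨c, hc, hdil⟩ := aux_dil A hAsa f' fa hfae
  have hqA : Measure.QuasiMeasurePreserving A volume volume := by
    obtain ⟨c, hc, -, hmap⟩ := aux_cov A
    refine ⟨A.continuous.measurable, ?_⟩
    rw [hmap]
    exact Measure.smul_absolutelyContinuous
  have horth := aux_orth fa g' ?_
  · filter_upwards [horth, hdil] with x hx hx2
    refine hx.imp id fun h => ?_
    rw [hx2] at h
    have hc' : (c : ℂ) ≠ 0 := by exact_mod_cast hc.ne'
    have := (mul_eq_zero.1 h).resolve_left hc'
    rw [hA, dil_symm_apply] at this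
    simpa [hai] using this
  intro s
  have hmp : MeasurePreserving (fun x : EuclideanSpace ℝ (Fin m) => x + s) volume volume :=
    measurePreserving_add_right volume s
  set h' := Lp.compMeasurePreserving _ hmp fa with hh'
  have hhe' : h' =ᵐ[volume] fun x => fa (x + s) := Lp.coeFn_compMeasurePreserving fa hmp
  set h := Lp.compMeasurePreserving _ he' h' with hh
  have hhe : h =ᵐ[volume] fun x => h' (WithLp.toLp 2 x) := Lp.coeFn_compMeasurePreserving h' he'
  let L : GL (Fin m) ℝ := ⟨diagonal fun i => b i, diagonal fun i => a i,
    by rw [diagonal_mul_diagonal]; simp [hai, hb], by rw [diagonal_mul_diagonal]; simp [hai, hb]⟩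
  have hLi : ((↑L⁻¹ : Matrix (Fin m) (Fin m) ℝ)) = diagonal fun i => a i := rfl
  set r : ℝ := |((↑L : Matrix (Fin m) (Fin m) ℝ)).det| ^ (-(1 / 2 : ℝ)) with hr
  have hr0 : r ≠ 0 := by
    have : ((↑L : Matrix (Fin m) (Fin m) ℝ)).det ≠ 0 :=
      ((Matrix.isUnit_iff_isUnit_det _).1 L.isUnit).ne_zero
    exact (Real.rpow_pos_of_pos (abs_pos.2 this) _).ne'
  have hmem : (r : ℂ) • h ∈ V := by
    refine hinv L (-(WithLp.ofLp s)) f _ hf ?_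
    have h1 : ∀ᵐ x : EuclideanSpace ℝ (Fin m), h' x = f (WithLp.ofLp (A (x + s))) := by
      have h2 : ∀ᵐ x : EuclideanSpace ℝ (Fin m), fa x = f (WithLp.ofLp (A x)) := by
        filter_upwards [hfae, hqA.ae hfe] with x h1 h2
        rw [h1, h2]
      filter_upwards [hhe', hmp.quasiMeasurePreserving.ae h2] with x h1 h2
      rw [h1, h2]
    filter_upwards [Lp.coeFn_smul (r : ℂ) h, hhe, he'.quasiMeasurePreserving.ae h1] with x e1 e2 e3
    rw [e1, Pi.smul_apply, e2, e3, hLi, ← hr]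
    have : (diagonal fun i => a i) *ᵥ (x - -(WithLp.ofLp s)) =
        WithLp.ofLp (A (WithLp.toLp 2 x + s)) := by
      ext i
      simp [mulVec_diagonal, hA, dil_apply]
    rw [this]
    simp
  have hin : inner ℂ g ((r : ℂ) • h) = (0 : ℂ) :=
    Submodule.inner_left_of_mem_orthogonal hmem hgV
  rw [inner_smul_right] at hin
  have hin2 := (mul_eq_zero.1 hin).resolve_left (by exact_mod_cast hr0)
  rw [L2.inner_def] at hin2
  rw [← hin2]
  have hemb : MeasurableEmbedding (@WithLp.ofLp 2 (Fin m → ℝ)) :=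
    (MeasurableEquiv.toLp 2 (Fin m → ℝ)).symm.measurableEmbedding
  rw [← he.integral_comp hemb]
  apply integral_congr_ae
  filter_upwards [hge, hhe', he.quasiMeasurePreserving.ae hhe] with x e1 e2 e3
  rw [e1, ← e2, e3]
  simp [mul_comm]
end

section
/- Let G = Aff(m) = GL(m,ℝ) ⋉ ℝᵐ and, for λ ∈ ℂ, define π on L²(ℝᵐ) by π_{(A,b)}[f](x) := |det A|^{−λ} f(A⁻¹(x − b)). If Re(λ) = 1/2 (i.e., λ ∈ 1/2 + iℝ), then π is an irreducible unitary representation of G on L²(ℝᵐ): each π_g is unitary, π is a group homomorphism, and the only closed π-invariant subspaces of L²(ℝᵐ) are {0} and L²(ℝᵐ). -/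
open MeasureTheory Matrix

section FourierAux
open FourierTransform SchwartzMap
open scoped ContDiff
variable {E : Type*} [NormedAddCommGroup E] [InnerProductSpace ℝ E] [FiniteDimensional ℝ E]
  [MeasurableSpace E] [BorelSpace E]

/-- weighted composition operators on `L²`. -/
lemma exists_wcomp (φ : E → E) (hφ : Measurable φ) (c : ENNReal) (hc : c ≠ ⊤)
    (hmap : Measure.map φ volume = c • (volume : Measure E)) (w : E → ℂ) (hw : Measurable w)
    (hw1 : ∀ x, ‖w x‖ = 1) :
    ∃ T : Lp ℂ 2 (volume : Measure E) →L[ℂ] Lp ℂ 2 (volume : Measure E),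
      ∀ f, T f =ᵐ[volume] fun x => w x * f (φ x) := by
  have qmp : Measure.QuasiMeasurePreserving φ volume volume :=
    ⟨hφ, by rw [hmap]; exact Measure.smul_absolutelyContinuous⟩
  have key : ∀ f : Lp ℂ 2 (volume : Measure E),
      eLpNorm (fun x => w x * f (φ x)) 2 volume
        = c ^ (1 / (2:ENNReal)).toReal * eLpNorm f 2 volume := by
    intro f
    have h1 : eLpNorm (fun x => w x * f (φ x)) 2 volume = eLpNorm (f ∘ φ) 2 volume := by
      apply eLpNorm_congr_norm_ae
      filter_upwards with x
      simp [hw1]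
    rw [h1, ← eLpNorm_map_measure _ hφ.aemeasurable, hmap,
      eLpNorm_smul_measure_of_ne_top (by simp)]
    · simp
    · rw [hmap]
      exact (Lp.aestronglyMeasurable f).smul_measure c
  have mem : ∀ f : Lp ℂ 2 (volume : Measure E), MemLp (fun x => w x * f (φ x)) 2 volume := by
    intro f
    refine ⟨hw.aestronglyMeasurable.mul
      ((Lp.aestronglyMeasurable f).comp_quasiMeasurePreserving qmp), ?_⟩
    rw [key]
    exact ENNReal.mul_lt_top (ENNReal.rpow_lt_top_of_nonneg (by simp) hc) (Lp.eLpNorm_lt_top f)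
  let T0 : Lp ℂ 2 (volume : Measure E) →ₗ[ℂ] Lp ℂ 2 (volume : Measure E) :=
    { toFun := fun f => (mem f).toLp _
      map_add' := by
        intro f g
        apply Lp.ext
        filter_upwards [(mem (f+g)).coeFn_toLp, (mem f).coeFn_toLp, (mem g).coeFn_toLp,
          Lp.coeFn_add ((mem f).toLp _) ((mem g).toLp _), qmp.ae (Lp.coeFn_add f g)]
          with x h1 h2 h3 h4 h5
        rw [h1, h4, Pi.add_apply, h2, h3, h5, Pi.add_apply, mul_add]
      map_smul' := by
        intro a f
        apply Lp.ext
        filter_upwards [(mem (a • f)).coeFn_toLp, (mem f).coeFn_toLp,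
          Lp.coeFn_smul a ((mem f).toLp _), qmp.ae (Lp.coeFn_smul a f)]
          with x h1 h2 h4 h5
        simp only [RingHom.id_apply]
        rw [h1, h4, Pi.smul_apply, h2, h5, Pi.smul_apply]
        simp only [smul_eq_mul]; ring }
  refine ⟨T0.mkContinuous (c ^ (1 / (2:ENNReal)).toReal).toReal ?_, fun f => ?_⟩
  · intro f
    change ‖(mem f).toLp _‖ ≤ _
    rw [Lp.norm_toLp, key, ENNReal.toReal_mul, Lp.norm_def]
  · exact (mem f).coeFn_toLp

lemma map_cle_volume (L : E ≃L[ℝ] E) : ∃ c : ENNReal, c ≠ ⊤ ∧ c ≠ 0 ∧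
    Measure.map L volume = c • (volume : Measure E) := by
  have hd : LinearMap.det (L.toLinearEquiv : E →ₗ[ℝ] E) ≠ 0 := L.toLinearEquiv.isUnit_det'.ne_zero
  refine ⟨_, ENNReal.ofReal_ne_top, ?_, Measure.map_linearMap_addHaar_eq_smul_addHaar _ hd⟩
  simpa using hd

lemma map_aff_volume (L : E ≃L[ℝ] E) (b : E) : ∃ c : ENNReal, c ≠ ⊤ ∧ c ≠ 0 ∧
    Measure.map (fun x => L (x - b)) volume = c • (volume : Measure E) := by
  obtain ⟨c, h1, h2, h3⟩ := map_cle_volume L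
  refine ⟨c, h1, h2, ?_⟩
  rw [← h3]
  conv_rhs => rw [← (measurePreserving_sub_right (volume : Measure E) b).map_eq]
  rw [Measure.map_map (by fun_prop) (by fun_prop)]
  rfl

/-- The Fourier transform intertwines affine changes of variables. -/
lemma fourier_aff (L M : E ≃L[ℝ] E) (hLM : ∀ x y, inner ℝ (L x) y = inner ℝ x (M y)) (b : E) :
    ∃ c : ℂ, c ≠ 0 ∧ ∀ (k : ℂ) (f h : Lp ℂ 2 (volume : Measure E)),
      (h =ᵐ[volume] fun x => k * f (L.symm (x - b))) →
      (𝓕 h : Lp ℂ 2 (volume : Measure E)) =ᵐ[volume] fun ξ =>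
        k * c * ((Real.fourierChar (-inner ℝ b ξ) : ℂ) * (𝓕 f : Lp ℂ 2 (volume : Measure E)) (M ξ))
        := by
  obtain ⟨c, hc, hc0, hmap⟩ := map_aff_volume L.symm b
  obtain ⟨d, hd, hd0, hmapM⟩ := map_cle_volume M
  have hphi : Measurable fun x => L.symm (x - b) := by fun_prop
  have qmp : Measure.QuasiMeasurePreserving (fun x => L.symm (x - b)) volume volume :=
    ⟨hphi, by rw [hmap]; exact Measure.smul_absolutelyContinuous⟩
  have qmpM : Measure.QuasiMeasurePreserving M volume volume :=
    ⟨by fun_prop, by rw [hmapM]; exact Measure.smul_absolutelyContinuous⟩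
  obtain ⟨P, hP⟩ := exists_wcomp _ hphi c hc hmap (fun _ => 1) (by fun_prop) (by simp)
  obtain ⟨Q, hQ⟩ := exists_wcomp M (by fun_prop) d hd hmapM
    (fun ξ => (Real.fourierChar (-inner ℝ b ξ) : ℂ)) (by
      apply Continuous.measurable
      have := Real.continuous_fourierChar
      fun_prop) (fun x => Circle.norm_coe _)
  have hchange : ∀ G : E → ℂ, Continuous G → 
      ∫ x, G (L.symm (x - b)) = (c.toReal : ℂ) * ∫ y, G y := by
    intro G hG
    have := integral_map (μ := (volume : Measure E)) hphi.aemeasurable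
      (f := G) (hG.aestronglyMeasurable)
    rw [← this, hmap, integral_smul_measure]
    simp
  have schw : ∀ s : 𝓢(E, ℂ), 𝓕 (P (s.toLp 2)) = (c.toReal : ℂ) • Q (𝓕 (s.toLp 2)) := by
    intro s
    let s' : 𝓢(E, ℂ) := compSubConstCLM ℂ b (compCLMOfContinuousLinearEquiv ℂ L.symm s)
    have hs' : ∀ x, s' x = s (L.symm (x - b)) := fun x => rfl
    have e1 : P (s.toLp 2) = s'.toLp 2 := by
      apply Lp.ext
      filter_upwards [hP (s.toLp 2), s'.coeFn_toLp 2 volume, qmp.ae (s.coeFn_toLp 2 volume)]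
        with x h1 h2 h3
      rw [h1, h2, h3, hs', one_mul]
    rw [e1, toLp_fourier_eq, toLp_fourier_eq]
    apply Lp.ext
    filter_upwards [(𝓕 s').coeFn_toLp 2 volume, Lp.coeFn_smul (c.toReal : ℂ) (Q ((𝓕 s).toLp 2)),
      hQ ((𝓕 s).toLp 2), qmpM.ae ((𝓕 s).coeFn_toLp 2 volume)] with ξ h1 h2 h3 h4
    rw [h1, h2, Pi.smul_apply, h3, h4, fourier_coe, fourier_coe, Real.fourier_eq, Real.fourier_eq]
    have := hchange (fun y => Real.fourierChar (-inner ℝ (L y + b) ξ) • s y) (by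
      have := Real.continuous_fourierChar
      have := s.continuous
      fun_prop)
    simp only [ContinuousLinearEquiv.apply_symm_apply, sub_add_cancel] at this
    simp only [hs']
    rw [this, smul_eq_mul, ← integral_const_mul (Real.fourierChar (-inner ℝ b ξ) : ℂ)]
    congr 1
    apply integral_congr_ae
    filter_upwards with y
    rw [inner_add_left, hLM, neg_add, AddChar.map_add_eq_mul]
    simp only [Circle.smul_def, Circle.coe_mul, smul_eq_mul]
    ring
  have all : ∀ f : Lp ℂ 2 (volume : Measure E), 𝓕 (P f) = (c.toReal : ℂ) • Q (𝓕 f) := by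
    intro f
    apply DenseRange.induction_on
      (p := fun f : Lp ℂ 2 (volume : Measure E) => 𝓕 (P f) = (c.toReal : ℂ) • Q (𝓕 f))
      (SchwartzMap.denseRange_toLpCLM (p := 2) ENNReal.ofNat_ne_top) f
    · apply isClosed_eq
      · exact (Lp.fourierTransformₗᵢ E ℂ).continuous.comp P.continuous
      · exact ((c.toReal : ℂ) • Q).continuous.comp (Lp.fourierTransformₗᵢ E ℂ).continuous
    · intro s; exact schw s
  refine ⟨c.toReal, by simpa using ENNReal.toReal_ne_zero.2 ⟨hc0, hc⟩, ?_⟩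
  intro k f h hh
  have hk : h = k • P f := by
    apply Lp.ext
    filter_upwards [hh, Lp.coeFn_smul k (P f), hP f] with x h1 h2 h3
    rw [h1, h2, Pi.smul_apply, h3, smul_eq_mul, one_mul]
  have : (𝓕 h : Lp ℂ 2 (volume : Measure E)) = (k * c.toReal) • Q (𝓕 f) := by
    rw [hk, FourierTransform.fourier_smul, all, smul_smul]
  rw [this]
  filter_upwards [Lp.coeFn_smul (k * (c.toReal : ℂ)) (Q (𝓕 f)), hQ (𝓕 f)] with x h1 h2
  rw [h1, Pi.smul_apply, h2, smul_eq_mul]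

lemma ae_zero_of_fourier_zero (H : E → ℂ) (hH : Integrable H) (h0 : ∀ ξ, 𝓕 H ξ = 0) :
    H =ᵐ[volume] 0 := by
  apply ae_eq_zero_of_integral_contDiff_smul_eq_zero hH.locallyIntegrable
  intro g g_smooth g_cpt
  have hg₁ : HasCompactSupport (Complex.ofRealCLM ∘ g) := g_cpt.comp_left rfl
  have hg₂ : ContDiff ℝ ∞ (Complex.ofRealCLM ∘ g) := by fun_prop
  let s : 𝓢(E, ℂ) := hg₁.toSchwartzMap hg₂
  let u : 𝓢(E, ℂ) := 𝓕⁻ s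
  have hu : 𝓕 (u : E → ℂ) = s := by
    rw [← fourier_coe]; simp [u]
  have := VectorFourier.integral_fourierIntegral_smul_eq_flip (μ := (volume : Measure E))
    (ν := (volume : Measure E)) (L := innerₗ E) (f := H) (g := u)
    Real.continuous_fourierChar (by simp only [innerₗ_apply_apply]; fun_prop) hH u.integrable
  rw [flip_innerₗ] at this
  change ∫ ξ, 𝓕 H ξ • u ξ = ∫ x, H x • 𝓕 (u : E → ℂ) x at this
  rw [hu] at this
  simp only [h0, zero_smul, integral_zero] at this
  rw [this]
  congr 1
  ext x
  change g x • H x = H x • ((g x : ℝ) : ℂ)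
  simp [mul_comm]

/-- Key orthogonality statement. -/
lemma ortho_aff (L M : E ≃L[ℝ] E) (hLM : ∀ x y, inner ℝ (L x) y = inner ℝ x (M y))
    (f g : Lp ℂ 2 (volume : Measure E))
    (hyp : ∀ b : E, ∃ (k : ℂ) (h : Lp ℂ 2 (volume : Measure E)), k ≠ 0 ∧
      (h =ᵐ[volume] fun x => k * f (L.symm (x - b))) ∧ inner ℂ h g = 0) :
    ∀ᵐ ξ, (𝓕 f : Lp ℂ 2 (volume : Measure E)) (M ξ) = 0 ∨
      (𝓕 g : Lp ℂ 2 (volume : Measure E)) ξ = 0 := by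
  obtain ⟨d, hd, hd0, hmapM⟩ := map_cle_volume M
  obtain ⟨Q, hQ⟩ := exists_wcomp M (by fun_prop) d hd hmapM (fun ξ => 1) (by fun_prop) (by simp)
  let H : E → ℂ := fun ξ => inner ℂ (Q (𝓕 f) ξ) ((𝓕 g : Lp ℂ 2 (volume : Measure E)) ξ)
  have hH : Integrable H := L2.integrable_inner _ _
  have hz : H =ᵐ[volume] 0 := by
    apply ae_zero_of_fourier_zero H hH
    intro b
    obtain ⟨k, h, hk, hh, hin⟩ := hyp (-b)
    obtain ⟨c, hc, hF⟩ := fourier_aff L M hLM (-b)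
    have hF := hF k f h hh
    rw [← Lp.inner_fourier_eq, L2.inner_def] at hin
    have : ∫ ξ, inner ℂ ((𝓕 h : Lp ℂ 2 (volume : Measure E)) ξ)
        ((𝓕 g : Lp ℂ 2 (volume : Measure E)) ξ)
        = starRingEnd ℂ (k * c) * 𝓕 H b := by
      rw [Real.fourier_eq, ← integral_const_mul]
      apply integral_congr_ae
      filter_upwards [hF, hQ (𝓕 f)] with ξ h1 h2
      simp only [H]
      rw [h1, h2]
      simp only [RCLike.inner_apply, Circle.smul_def, map_mul, smul_eq_mul, inner_neg_left, neg_neg,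
        map_one, real_inner_comm ξ b]
      rw [← Circle.coe_inv_eq_conj, AddChar.map_neg_eq_inv]
      ring
    rw [this] at hin
    simpa [hk, hc] using hin
  filter_upwards [hz, hQ (𝓕 f)] with ξ h1 h2
  simp only [H] at h1
  rw [h2] at h1
  simpa [or_comm] using h1

end FourierAux

section Core
open FourierTransform

/-- Diagonal dilation of Euclidean space. -/
noncomputable def dilE {m : ℕ} (t : Fin m → ℝ) (ht : ∀ i, t i ≠ 0) :
    EuclideanSpace ℝ (Fin m) ≃L[ℝ] EuclideanSpace ℝ (Fin m) :=
  LinearEquiv.toContinuousLinearEquiv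
    { toFun := fun x => WithLp.toLp 2 (fun i => t i * x i)
      invFun := fun x => WithLp.toLp 2 (fun i => (t i)⁻¹ * x i)
      map_add' := by intro x y; ext i; simp [mul_add]
      map_smul' := by intro a x; ext i; simp; ring
      left_inv := by intro x; ext i; simp [ht i]
      right_inv := by intro x; ext i; simp [ht i] }

lemma dilE_apply {m : ℕ} (t : Fin m → ℝ) (ht : ∀ i, t i ≠ 0) (x : EuclideanSpace ℝ (Fin m)) :
    dilE t ht x = WithLp.toLp 2 (fun i => t i * x i) := rfl

lemma dilE_symm_apply {m : ℕ} (t : Fin m → ℝ) (ht : ∀ i, t i ≠ 0)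
    (x : EuclideanSpace ℝ (Fin m)) :
    (dilE t ht).symm x = WithLp.toLp 2 (fun i => (t i)⁻¹ * x i) := rfl

lemma ae_coord_ne (m : ℕ) : ∀ᵐ x : EuclideanSpace ℝ (Fin m), ∀ i, x i ≠ 0 := by
  rw [ae_all_iff]
  intro i
  have h : ∀ᵐ x : Fin m → ℝ, x i ≠ 0 := Measure.ae_eval_ne _ i 0
  exact (PiLp.volume_preserving_ofLp (Fin m)).quasiMeasurePreserving.ae h

lemma core_E (m : ℕ) (f g : Lp ℂ 2 (volume : Measure (EuclideanSpace ℝ (Fin m))))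
    (hyp : ∀ (t : Fin m → ℝ) (ht : ∀ i, t i ≠ 0) (b : EuclideanSpace ℝ (Fin m)),
      ∃ (k : ℂ) (h : Lp ℂ 2 (volume : Measure (EuclideanSpace ℝ (Fin m)))), k ≠ 0 ∧
      (h =ᵐ[volume] fun x => k * f ((dilE t ht).symm (x - b))) ∧ inner ℂ h g = 0) :
    f = 0 ∨ g = 0 := by
  by_contra hcon
  push Not at hcon
  obtain ⟨hf, hg⟩ := hcon
  set F : Lp ℂ 2 (volume : Measure (EuclideanSpace ℝ (Fin m))) := 𝓕 f with hF
  set G : Lp ℂ 2 (volume : Measure (EuclideanSpace ℝ (Fin m))) := 𝓕 g with hG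
  have hF0 : F ≠ 0 := by
    intro h; apply hf
    rw [← norm_eq_zero, ← Lp.norm_fourier_eq, ← hF, h, norm_zero]
  have hG0 : G ≠ 0 := by
    intro h; apply hg
    rw [← norm_eq_zero, ← Lp.norm_fourier_eq, ← hG, h, norm_zero]
  have h1 : ∀ᵐ t : EuclideanSpace ℝ (Fin m), ∀ᵐ ξ : EuclideanSpace ℝ (Fin m),
      F (WithLp.toLp 2 (fun i => t i * ξ i)) = 0 ∨ G ξ = 0 := by
    filter_upwards [ae_coord_ne m] with t ht
    have := ortho_aff (dilE t ht) (dilE t ht) (by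
      intro x y
      simp only [dilE_apply, PiLp.inner_apply, RCLike.inner_apply, conj_trivial]
      apply Finset.sum_congr rfl
      intro i _
      ring) f g (hyp t ht)
    exact this
  have hFm : Measurable F := (Lp.stronglyMeasurable F).measurable
  have hGm : Measurable G := (Lp.stronglyMeasurable G).measurable
  rw [Measure.ae_ae_comm] at h1
  · apply hG0
    rw [Lp.eq_zero_iff_ae_eq_zero]
    filter_upwards [h1, ae_coord_ne m] with ξ hξ hne
    by_contra hGξ
    apply hF0
    rw [Lp.eq_zero_iff_ae_eq_zero]
    have h2 : ∀ᵐ t : EuclideanSpace ℝ (Fin m), F (dilE ξ hne t) = 0 := by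
      filter_upwards [hξ] with t ht
      rcases ht with h | h
      · rw [← h, dilE_apply]
        congr 2
        ext i
        ring
      · exact absurd h hGξ
    obtain ⟨c, hc, hc0, hmap⟩ := map_cle_volume (dilE ξ hne).symm
    have qmp : Measure.QuasiMeasurePreserving (dilE ξ hne).symm volume volume :=
      ⟨by fun_prop, by rw [hmap]; exact Measure.smul_absolutelyContinuous⟩
    filter_upwards [qmp.ae h2] with x hx
    simpa using hx
  · have hm : Measurable fun p : EuclideanSpace ℝ (Fin m) × EuclideanSpace ℝ (Fin m) =>
        (WithLp.toLp 2 (fun i => p.1 i * p.2 i) : EuclideanSpace ℝ (Fin m)) := by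
      fun_prop
    exact ((hFm.comp hm) (measurableSet_singleton 0)).union
      ((hGm.comp measurable_snd) (measurableSet_singleton 0))

end Core

section Pi

lemma measurable_affine_pi {m : ℕ} (A : GL (Fin m) ℝ) (b : Fin m → ℝ) :
    Measurable (fun x : Fin m → ℝ => (↑A⁻¹ : Matrix (Fin m) (Fin m) ℝ) *ᵥ (x - b)) := by
  apply Continuous.measurable
  exact Continuous.matrix_mulVec continuous_const (by fun_prop)

lemma map_affine_pi {m : ℕ} (A : GL (Fin m) ℝ) (b : Fin m → ℝ) :
    Measure.map (fun x : Fin m → ℝ => (↑A⁻¹ : Matrix (Fin m) (Fin m) ℝ) *ᵥ (x - b)) volume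
      = ENNReal.ofReal |(↑A : Matrix (Fin m) (Fin m) ℝ).det| • volume := by
  have hdet : (↑A⁻¹ : Matrix (Fin m) (Fin m) ℝ).det ≠ 0 := by
    have := (A⁻¹).isUnit.map (Matrix.detMonoidHom (R := ℝ) (n := Fin m))
    exact this.ne_zero
  have h := Real.map_matrix_volume_pi_eq_smul_volume_pi hdet
  have h2 : (↑A⁻¹ : Matrix (Fin m) (Fin m) ℝ).det⁻¹ = (↑A : Matrix (Fin m) (Fin m) ℝ).det := by
    rw [Matrix.coe_units_inv, Matrix.det_nonsing_inv, Ring.inverse_eq_inv', inv_inv]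
  rw [h2] at h
  rw [← h]
  conv_rhs => rw [← (measurePreserving_sub_right (volume : Measure (Fin m → ℝ)) b).map_eq]
  rw [Measure.map_map]
  · rfl
  · exact (LinearMap.continuous_of_finiteDimensional _).measurable
  · fun_prop

end Pi

/-- Let `G = Aff(m) = GL(m,ℝ) ⋉ ℝᵐ` and, for `λ ∈ ℂ`, let `π` be
(given, a.e., by) `π_{(A,b)}[f](x) = |det A|^{-λ} f(A⁻¹(x - b))` on `L²(ℝᵐ)`, where
`|det A|^{-λ}` is the complex power.  If `Re λ = 1/2` then `π` is an irreducible unitary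
representation: each `π_g` is unitary (isometric and bijective), `π` is a group
homomorphism with respect to the affine group law
`(A₁,b₁)·(A₂,b₂) = (A₁A₂, A₁b₂ + b₁)`, and the only closed `π`-invariant subspaces of
`L²(ℝᵐ)` are `{0}` and `L²(ℝᵐ)`. -/
theorem statement9 (m : ℕ) (lam : ℂ) (hlam : lam.re = 1 / 2)
    (π : GL (Fin m) ℝ × (Fin m → ℝ) →
      Lp ℂ 2 (volume : Measure (Fin m → ℝ)) →L[ℂ] Lp ℂ 2 (volume : Measure (Fin m → ℝ)))
    (hπ : ∀ (A : GL (Fin m) ℝ) (b : Fin m → ℝ)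
        (f : Lp ℂ 2 (volume : Measure (Fin m → ℝ))),
      ⇑(π (A, b) f) =ᵐ[volume] fun x =>
        (((|((↑A : Matrix (Fin m) (Fin m) ℝ)).det| : ℝ) : ℂ) ^ (-lam)) *
          f ((↑A⁻¹ : Matrix (Fin m) (Fin m) ℝ) *ᵥ (x - b))) :
    (∀ (g : GL (Fin m) ℝ × (Fin m → ℝ)) (f : Lp ℂ 2 (volume : Measure (Fin m → ℝ))),
        ‖π g f‖ = ‖f‖) ∧
    (∀ g : GL (Fin m) ℝ × (Fin m → ℝ), Function.Bijective (π g)) ∧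
    (∀ (A₁ A₂ : GL (Fin m) ℝ) (b₁ b₂ : Fin m → ℝ),
        π (A₁ * A₂, (↑A₁ : Matrix (Fin m) (Fin m) ℝ) *ᵥ b₂ + b₁) =
          (π (A₁, b₁)).comp (π (A₂, b₂))) ∧
    (∀ V : Submodule ℂ (Lp ℂ 2 (volume : Measure (Fin m → ℝ))),
        IsClosed (V : Set (Lp ℂ 2 (volume : Measure (Fin m → ℝ)))) →
        (∀ (g : GL (Fin m) ℝ × (Fin m → ℝ))
            (f : Lp ℂ 2 (volume : Measure (Fin m → ℝ))), f ∈ V → π g f ∈ V) →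
        V = ⊥ ∨ V = ⊤) := by
  have qmp : ∀ (A : GL (Fin m) ℝ) (b : Fin m → ℝ), Measure.QuasiMeasurePreserving
      (fun x : Fin m → ℝ => (↑A⁻¹ : Matrix (Fin m) (Fin m) ℝ) *ᵥ (x - b)) volume volume := by
    intro A b
    refine ⟨measurable_affine_pi A b, ?_⟩
    rw [map_affine_pi]
    exact Measure.smul_absolutelyContinuous
  have hdet : ∀ A : GL (Fin m) ℝ, (↑A : Matrix (Fin m) (Fin m) ℝ).det ≠ 0 := by
    intro A
    exact (A.isUnit.map (Matrix.detMonoidHom (R := ℝ) (n := Fin m))).ne_zero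
  have hnorm : ∀ (g : GL (Fin m) ℝ × (Fin m → ℝ)) (f : Lp ℂ 2 (volume : Measure (Fin m → ℝ))),
        ‖π g f‖ = ‖f‖ := by
    rintro ⟨A, b⟩ f
    have hp : 0 < |(↑A : Matrix (Fin m) (Fin m) ℝ).det| := abs_pos.2 (hdet A)
    have e1 : eLpNorm (π (A, b) f) 2 volume
        = ‖(((|((↑A : Matrix (Fin m) (Fin m) ℝ)).det| : ℝ) : ℂ) ^ (-lam))‖ₑ *
          eLpNorm (f ∘ (fun x : Fin m → ℝ => (↑A⁻¹ : Matrix (Fin m) (Fin m) ℝ) *ᵥ (x - b))) 2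
            volume := by
      rw [eLpNorm_congr_ae (hπ A b f), ← eLpNorm_const_smul]
      rfl
    rw [Lp.norm_def, Lp.norm_def, e1,
      ← eLpNorm_map_measure _ (measurable_affine_pi A b).aemeasurable, map_affine_pi,
      eLpNorm_smul_measure_of_ne_top (by simp)]
    · simp only [smul_eq_mul, ENNReal.toReal_mul, toReal_enorm]
      rw [← mul_assoc, Complex.norm_cpow_eq_rpow_re_of_pos hp, ← ENNReal.toReal_rpow,
        ENNReal.toReal_ofReal hp.le, Complex.neg_re, hlam, ← Real.rpow_add hp]
      norm_num
    · rw [map_affine_pi]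
      exact (Lp.aestronglyMeasurable f).smul_measure _
  have hhom : ∀ (A₁ A₂ : GL (Fin m) ℝ) (b₁ b₂ : Fin m → ℝ),
        π (A₁ * A₂, (↑A₁ : Matrix (Fin m) (Fin m) ℝ) *ᵥ b₂ + b₁) =
          (π (A₁, b₁)).comp (π (A₂, b₂)) := by
    intro A₁ A₂ b₁ b₂
    ext1 f
    apply Lp.ext
    filter_upwards [hπ (A₁ * A₂) ((↑A₁ : Matrix (Fin m) (Fin m) ℝ) *ᵥ b₂ + b₁) f,
      hπ A₁ b₁ (π (A₂, b₂) f), (qmp A₁ b₁).ae (hπ A₂ b₂ f)] with x h1 h2 h3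
    rw [ContinuousLinearMap.comp_apply, h1, h2, h3, ← mul_assoc]
    congr 1
    · rw [Units.val_mul, Matrix.det_mul, abs_mul, Complex.ofReal_mul,
        Complex.mul_cpow_ofReal_nonneg (abs_nonneg _) (abs_nonneg _)]
    · congr 1
      rw [_root_.mul_inv_rev, Units.val_mul, ← Matrix.mulVec_mulVec]
      congr 1
      rw [add_comm, ← sub_sub, Matrix.mulVec_sub _ (x - b₁), Matrix.mulVec_mulVec, ← Units.val_mul]
      simp
  have hid : ∀ f, π (1, 0) f = f := by
    intro f
    apply Lp.ext
    filter_upwards [hπ 1 0 f] with x h1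
    rw [h1]
    simp
  refine ⟨hnorm, ?_, hhom, ?_⟩
  · rintro ⟨A, b⟩
    constructor
    · rw [injective_iff_map_eq_zero]
      intro f hf
      rw [← norm_eq_zero, ← hnorm (A, b), hf, norm_zero]
    · intro f
      refine ⟨π (A⁻¹, -((↑A⁻¹ : Matrix (Fin m) (Fin m) ℝ) *ᵥ b)) f, ?_⟩
      rw [← ContinuousLinearMap.comp_apply, ← hhom, Matrix.mulVec_neg, Matrix.mulVec_mulVec,
        ← Units.val_mul]
      simpa using hid f
  · intro V hV hinv
    by_cases hb : V = ⊥
    · exact Or.inl hb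
    right
    obtain ⟨f, hfV, hf0⟩ := Submodule.exists_mem_ne_zero_of_ne_bot hb
    have : CompleteSpace V := hV.completeSpace_coe
    rw [← Submodule.orthogonal_eq_bot_iff, Submodule.eq_bot_iff]
    intro g hg
    rw [Submodule.mem_orthogonal] at hg
    have mp := PiLp.volume_preserving_ofLp (Fin m)
    let U := Lp.compMeasurePreservingₗᵢ (E := ℂ) (p := 2) ℂ _ mp
    have hU : ∀ h, U h =ᵐ[volume] fun x => h (WithLp.ofLp x) := fun h =>
      Lp.coeFn_compMeasurePreserving h mp
    have hor : U f = 0 ∨ U g = 0 := by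
      apply core_E
      intro t ht b
      let A : GL (Fin m) ℝ := ⟨Matrix.diagonal t, Matrix.diagonal (fun i => (t i)⁻¹),
        by simp [Matrix.diagonal_mul_diagonal, ht], by simp [Matrix.diagonal_mul_diagonal, ht]⟩
      have hA : (↑A⁻¹ : Matrix (Fin m) (Fin m) ℝ) = Matrix.diagonal (fun i => (t i)⁻¹) := rfl
      refine ⟨(((|((↑A : Matrix (Fin m) (Fin m) ℝ)).det| : ℝ) : ℂ) ^ (-lam)),
        U (π (A, WithLp.ofLp b) f), ?_, ?_, ?_⟩
      · rw [Complex.cpow_ne_zero_iff]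
        left
        exact_mod_cast abs_ne_zero.2 (hdet A)
      · obtain ⟨c, hc, hc0, hmap⟩ := map_aff_volume (dilE t ht).symm b
        have qmpE : Measure.QuasiMeasurePreserving
            (fun x => (dilE t ht).symm (x - b)) volume volume :=
          ⟨by fun_prop, by rw [hmap]; exact Measure.smul_absolutelyContinuous⟩
        filter_upwards [hU (π (A, WithLp.ofLp b) f),
          mp.quasiMeasurePreserving.ae (hπ A (WithLp.ofLp b) f), qmpE.ae (hU f)] with x h1 h2 h3
        rw [h1, h2, h3, hA, dilE_symm_apply]
        congr 2
        ext i
        simp [Matrix.mulVec_diagonal]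
      · rw [LinearIsometry.inner_map_map]
        exact hg _ (hinv _ _ hfV)
    rcases hor with h | h
    · exact absurd ((map_eq_zero_iff U U.injective).1 h) hf0
    · exact (map_eq_zero_iff U U.injective).1 h
end

section
/- Let G := O(m) × Aff(m) = O(m) × (GL(m,ℝ) ⋉ ℝᵐ) and define π : G → U(L²(ℝᵐ; ℝᵐ)) on vector-valued square-integrable functions f : ℝᵐ → ℝᵐ by π_{(Q,L,t)}[f](x) := |det L|^{−1/2} Q f(L⁻¹(x − t)). Then π is an irreducible unitary representation: its only closed invariant subspaces are {0} and L²(ℝᵐ; ℝᵐ). -/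
open MeasureTheory Matrix

open scoped FourierTransform SchwartzMap ContDiff InnerProductSpace ComplexConjugate

section Fou
variable {E : Type*} [NormedAddCommGroup E] [InnerProductSpace ℝ E] [FiniteDimensional ℝ E]
  [MeasurableSpace E] [BorelSpace E]

lemma aux_map_equiv (l : E ≃L[ℝ] E) :
    ∃ c : ℝ, 0 < c ∧ Measure.map l (volume : Measure E) = ENNReal.ofReal c • volume := by
  have h : LinearMap.det (l.toLinearEquiv : E →ₗ[ℝ] E) ≠ 0 := l.toLinearEquiv.isUnit_det'.ne_zero
  refine ⟨|(LinearMap.det (l.toLinearEquiv : E →ₗ[ℝ] E))⁻¹|, by positivity, ?_⟩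
  exact Measure.map_linearMap_addHaar_eq_smul_addHaar volume h

lemma aux_map_aff (k : E ≃L[ℝ] E) (t : E) :
    ∃ c : ℝ, 0 < c ∧ Measure.map (fun x => k (x - t)) (volume : Measure E)
      = ENNReal.ofReal c • volume := by
  obtain ⟨c, hc, h⟩ := aux_map_equiv k
  refine ⟨c, hc, ?_⟩
  rw [← h]
  have := Measure.map_map (μ := (volume : Measure E)) (g := k) (f := fun x => x - t)
    k.continuous.measurable (by fun_prop)
  rw [(measurePreserving_sub_right volume t).map_eq] at this
  exact this.symm

lemma aux_integral_equiv (k : E ≃L[ℝ] E) :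
    ∃ c : ℝ, 0 < c ∧ ∀ f : E → ℂ, ∫ x, f (k x) = (c : ℂ) * ∫ x, f x := by
  obtain ⟨c, hc, h⟩ := aux_map_equiv k
  refine ⟨c, hc, fun f => ?_⟩
  have := (k.toHomeomorph.measurableEmbedding).integral_map (μ := volume) f
  have h2 : Measure.map (k.toHomeomorph) (volume : Measure E) = ENNReal.ofReal c • volume := h
  rw [h2, integral_smul_measure, ENNReal.toReal_ofReal hc.le] at this
  simpa using this.symm

lemma aux_memLp_aff {F : Type*} [NormedAddCommGroup F] (k : E ≃L[ℝ] E) (t : E) {f : E → F}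
    (hf : MemLp f 2 (volume : Measure E)) : MemLp (fun x => f (k (x - t))) 2 volume := by
  obtain ⟨c, hc, h⟩ := aux_map_aff k t
  have h1 : MemLp f 2 (Measure.map (fun x => k (x - t)) (volume : Measure E)) := by
    rw [h]; exact hf.smul_measure ENNReal.ofReal_ne_top
  exact h1.comp_of_map (by fun_prop)

lemma aux_ae_aff (k : E ≃L[ℝ] E) (t : E) {p : E → Prop}
    (hp : ∀ᵐ x ∂(volume : Measure E), p x) : ∀ᵐ x ∂(volume : Measure E), p (k (x - t)) := by
  obtain ⟨c, hc, h⟩ := aux_map_aff k t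
  have h1 : ∀ᵐ x ∂(Measure.map (fun x => k (x - t)) (volume : Measure E)), p x := by
    rw [h]; exact Measure.ae_smul_measure hp _
  exact ae_of_ae_map (by fun_prop) h1

lemma aux_weak (w : Lp ℂ 2 (volume : Measure E)) (φ : 𝓢(E, ℂ)) :
    ∫ x, φ x * (𝓕 w : Lp ℂ 2 (volume : Measure E)) x = ∫ x, (𝓕 φ) x * w x := by
  have h := congrArg (fun T => T φ) (Lp.fourier_toTemperedDistribution_eq w)
  simp only [TemperedDistribution.fourier_apply, Lp.toTemperedDistribution_apply, smul_eq_mul] at h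
  exact h.symm

lemma aux_inj {h : E → ℂ} (hh : Integrable h) (h0 : ∀ t, 𝓕 h t = 0) : h =ᵐ[volume] 0 := by
  refine ae_eq_zero_of_integral_contDiff_smul_eq_zero hh.locallyIntegrable ?_
  intro g hg hgs
  have hgc : ContDiff ℝ ∞ (fun x => (g x : ℂ)) := Complex.ofRealCLM.contDiff.comp hg
  have hgcs : HasCompactSupport (fun x => (g x : ℂ)) := hgs.comp_left (g := Complex.ofReal) rfl
  set φ : 𝓢(E, ℂ) := hgcs.toSchwartzMap hgc with hφ
  have key := VectorFourier.integral_fourierIntegral_smul_eq_flip (μ := (volume : Measure E))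
    (ν := (volume : Measure E)) (L := innerₗ E) (e := Real.fourierChar) (f := h)
    (g := (𝓕⁻ φ : 𝓢(E, ℂ))) Real.continuous_fourierChar continuous_inner hh
    (𝓕⁻ φ : 𝓢(E, ℂ)).integrable
  have e1 : ∀ ξ, VectorFourier.fourierIntegral Real.fourierChar volume (innerₗ E) h ξ = 0 := h0
  have e2 : ∀ x, VectorFourier.fourierIntegral Real.fourierChar volume (innerₗ E).flip
      (𝓕⁻ φ : 𝓢(E, ℂ)) x = φ x := by
    intro x
    have : (𝓕 (𝓕⁻ φ : 𝓢(E, ℂ)) : 𝓢(E, ℂ)) x = φ x := by simp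
    rw [← this, flip_innerₗ]; rfl
  simp only [e1, e2, zero_smul, integral_zero] at key
  rw [key]
  congr 1; ext x
  simp [hφ, mul_comm]

lemma aux_fourier_aff (l l' : E ≃L[ℝ] E) (hl : ∀ x y, ⟪l x, y⟫_ℝ = ⟪x, l' y⟫_ℝ) (t : E)
    (w w' : Lp ℂ 2 (volume : Measure E)) (hw : w' =ᵐ[volume] fun x => w (l.symm (x - t))) :
    ∃ C : ℂ, C ≠ 0 ∧ (𝓕 w' : Lp ℂ 2 (volume : Measure E)) =ᵐ[volume] fun ξ =>
      C * ((Real.fourierChar (-⟪ξ, t⟫_ℝ) : ℂ) * (𝓕 w : Lp ℂ 2 (volume : Measure E)) (l' ξ)) := by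
  obtain ⟨c, hc, hint⟩ := aux_integral_equiv l
  obtain ⟨c', hc', hint'⟩ := aux_integral_equiv l'
  have hcC : (c : ℂ) ≠ 0 := by exact_mod_cast hc.ne'
  have hcC' : (c' : ℂ) ≠ 0 := by exact_mod_cast hc'.ne'
  refine ⟨c⁻¹, inv_ne_zero hcC, ?_⟩
  have hW : MemLp (fun ξ => (𝓕 w : Lp ℂ 2 (volume : Measure E)) (l' ξ)) 2 volume := by
    simpa using aux_memLp_aff l' 0 (Lp.memLp (𝓕 w : Lp ℂ 2 (volume : Measure E)))
  have hcont : Continuous fun ξ : E => (Real.fourierChar (-⟪ξ, t⟫_ℝ) : ℂ) := by fun_prop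
  have hW1 : LocallyIntegrable (fun ξ => (c : ℂ)⁻¹ * ((Real.fourierChar (-⟪ξ, t⟫_ℝ) : ℂ) *
      (𝓕 w : Lp ℂ 2 (volume : Measure E)) (l' ξ))) volume := by
    have h1 : MemLp (fun ξ => (c : ℂ)⁻¹ * ((Real.fourierChar (-⟪ξ, t⟫_ℝ) : ℂ) *
      (𝓕 w : Lp ℂ 2 (volume : Measure E)) (l' ξ))) 2 volume := by
      apply MemLp.const_mul
      refine hW.of_le (hcont.aestronglyMeasurable.mul hW.1) (Filter.Eventually.of_forall ?_)
      intro x; simp [Circle.norm_coe]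
    exact h1.locallyIntegrable (by norm_num)
  refine ae_eq_of_integral_contDiff_smul_eq
    ((Lp.memLp (𝓕 w' : Lp ℂ 2 (volume : Measure E))).locallyIntegrable (by norm_num)) hW1 ?_
  intro g hg hgs
  have hgc : ContDiff ℝ ∞ (fun x => (g x : ℂ)) := Complex.ofRealCLM.contDiff.comp hg
  have hgcs : HasCompactSupport (fun x => (g x : ℂ)) := hgs.comp_left (g := Complex.ofReal) rfl
  set φ : 𝓢(E, ℂ) := hgcs.toSchwartzMap hgc with hφ
  have hφx : ∀ x, φ x = (g x : ℂ) := fun x => rfl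
  have hpc : ContDiff ℝ ∞ (fun x => (Real.fourierChar (-⟪l'.symm x, t⟫_ℝ) : ℂ) * φ (l'.symm x)) := by
    refine ContDiff.mul ?_ (hgc.comp l'.symm.contDiff)
    simp only [Real.fourierChar_apply]
    have h1 : ContDiff ℝ ∞ (fun x => ⟪l'.symm x, t⟫_ℝ) :=
      l'.symm.contDiff.inner ℝ contDiff_const
    have h2 : ContDiff ℝ ∞ (fun x => ((2 * Real.pi * -⟪l'.symm x, t⟫_ℝ : ℝ) : ℂ)) :=
      Complex.ofRealCLM.contDiff.comp (contDiff_const.mul h1.neg)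
    exact (h2.mul contDiff_const).cexp
  have hpcs : HasCompactSupport
      (fun x => (Real.fourierChar (-⟪l'.symm x, t⟫_ℝ) : ℂ) * φ (l'.symm x)) :=
    HasCompactSupport.mul_left (hgcs.comp_homeomorph l'.symm.toHomeomorph)
  set ψ : 𝓢(E, ℂ) := hpcs.toSchwartzMap hpc with hψ
  have hψx : ∀ x, ψ x = (Real.fourierChar (-⟪l'.symm x, t⟫_ℝ) : ℂ) * φ (l'.symm x) := fun x => rfl
  have hF : ∀ y, (𝓕 φ) (l y + t) = (c' : ℂ) * (𝓕 ψ) y := by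
    intro y
    have h1 : (𝓕 ψ) y = ∫ v, (Real.fourierChar (-⟪v, y⟫_ℝ) : ℂ) * ψ v := by
      rw [SchwartzMap.fourier_coe, Real.fourier_eq]; rfl
    have h2 : (𝓕 φ) (l y + t) = ∫ v, (Real.fourierChar (-⟪v, l y + t⟫_ℝ) : ℂ) * φ v := by
      rw [SchwartzMap.fourier_coe, Real.fourier_eq]; rfl
    have h3 := hint' (fun v => (Real.fourierChar (-⟪v, y⟫_ℝ) : ℂ) * ψ v)
    rw [h1, h2, ← h3]
    congr 1; ext v
    rw [hψx, ContinuousLinearEquiv.symm_apply_apply, ← mul_assoc, ← Circle.coe_mul,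
      ← AddChar.map_add_eq_mul, inner_add_right, real_inner_comm (l y) v, hl, real_inner_comm y,
      neg_add, real_inner_comm]
  calc ∫ x, g x • (𝓕 w' : Lp ℂ 2 (volume : Measure E)) x = ∫ x, φ x * (𝓕 w' : Lp ℂ 2 (volume : Measure E)) x := by
        simp [hφx]
    _ = ∫ x, (𝓕 φ) x * w' x := aux_weak _ _
    _ = ∫ x, (𝓕 φ) x * w (l.symm (x - t)) := by
        apply integral_congr_ae
        filter_upwards [hw] with x hx
        rw [hx]
    _ = ∫ x, (𝓕 φ) (x + t) * w (l.symm x) := by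
        rw [← integral_add_right_eq_self _ t]; simp
    _ = (c : ℂ)⁻¹ * ∫ y, (𝓕 φ) (l y + t) * w y := by
        have := hint (fun x => (𝓕 φ) (x + t) * w (l.symm x))
        simp only [ContinuousLinearEquiv.symm_apply_apply] at this
        rw [this, inv_mul_cancel_left₀ hcC]
    _ = (c : ℂ)⁻¹ * ((c' : ℂ) * ∫ y, (𝓕 ψ) y * w y) := by
        simp only [hF, mul_assoc, integral_const_mul]
    _ = (c : ℂ)⁻¹ * ((c' : ℂ) * ∫ y, ψ y * (𝓕 w : Lp ℂ 2 (volume : Measure E)) y) := by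
        rw [aux_weak]
    _ = (c : ℂ)⁻¹ * ∫ ξ, ψ (l' ξ) * (𝓕 w : Lp ℂ 2 (volume : Measure E)) (l' ξ) := by
        rw [hint' (fun y => ψ y * (𝓕 w : Lp ℂ 2 (volume : Measure E)) y)]
    _ = _ := by
        rw [← integral_const_mul]
        congr 1; ext ξ
        simp only [hψx, ContinuousLinearEquiv.symm_apply_apply, hφx, Complex.real_smul]
        ring


lemma aux_ofReal {u : E → ℝ} (hu : MemLp u 2 (volume : Measure E)) :
    MemLp (fun x => (u x : ℂ)) 2 (volume : Measure E) :=
  hu.ofReal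

lemma aux_scalar {u v : E → ℝ} (hu : MemLp u 2 (volume : Measure E))
    (hv : MemLp v 2 (volume : Measure E))
    (l l' : E ≃L[ℝ] E) (hl : ∀ x y, ⟪l x, y⟫_ℝ = ⟪x, l' y⟫_ℝ)
    (h : ∀ t, ∫ x, u x * v (l.symm (x - t)) = 0) :
    ∀ᵐ ξ ∂(volume : Measure E),
      (𝓕 ((aux_ofReal hu).toLp _) : Lp ℂ 2 (volume : Measure E)) ξ = 0 ∨
      (𝓕 ((aux_ofReal hv).toLp _) : Lp ℂ 2 (volume : Measure E)) (l' ξ) = 0 := by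
  set U := (𝓕 ((aux_ofReal hu).toLp _) : Lp ℂ 2 (volume : Measure E)) with hU
  set W := (𝓕 ((aux_ofReal hv).toLp _) : Lp ℂ 2 (volume : Measure E)) with hW
  have hWl : MemLp (fun ξ => W (l' ξ)) 2 volume := by
    simpa using aux_memLp_aff l' 0 (Lp.memLp W)
  have hint : Integrable (fun ξ => conj (U ξ) * W (l' ξ)) (volume : Measure E) := by
    have := MemLp.integrable_mul (Lp.memLp U).star hWl
    exact this
  have key : ∀ t, 𝓕 (fun ξ => conj (U ξ) * W (l' ξ)) t = 0 := by
    intro t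
    have hva : MemLp (fun x => (v (l.symm (x - t)) : ℂ)) 2 (volume : Measure E) :=
      aux_memLp_aff l.symm t (aux_ofReal hv)
    obtain ⟨C, hC, hfour⟩ := aux_fourier_aff l l' hl t ((aux_ofReal hv).toLp _)
      (hva.toLp _) (by
        filter_upwards [hva.coeFn_toLp, aux_ae_aff l.symm t (aux_ofReal hv).coeFn_toLp]
          with x h1 h2
        rw [h1, h2])
    have hin := Lp.inner_fourier_eq ((aux_ofReal hu).toLp _) (hva.toLp _)
    rw [L2.inner_def, L2.inner_def] at hin
    have e1 : ∫ x, ⟪((aux_ofReal hu).toLp _) x, (hva.toLp _) x⟫_ℂ = 0 := by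
      have : ∫ x, ⟪((aux_ofReal hu).toLp _) x, (hva.toLp _) x⟫_ℂ =
          ∫ x, ((u x * v (l.symm (x - t)) : ℝ) : ℂ) := by
        apply integral_congr_ae
        filter_upwards [hva.coeFn_toLp, (aux_ofReal hu).coeFn_toLp] with x h1 h2
        rw [h1, h2]
        simp [mul_comm]
      rw [this, integral_complex_ofReal, h t]; simp
    rw [e1] at hin
    have e2 : ∫ x, ⟪(𝓕 ((aux_ofReal hu).toLp _) : Lp ℂ 2 (volume : Measure E)) x,
        (𝓕 (hva.toLp _) : Lp ℂ 2 (volume : Measure E)) x⟫_ℂ =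
        C * 𝓕 (fun ξ => conj (U ξ) * W (l' ξ)) t := by
      rw [Real.fourier_eq, ← integral_const_mul]
      apply integral_congr_ae
      filter_upwards [hfour] with x hx
      rw [hx]
      simp only [RCLike.inner_apply, Circle.smul_def, smul_eq_mul]
      ring
    rw [e2] at hin
    exact (mul_eq_zero.mp hin).resolve_left hC
  filter_upwards [aux_inj hint key] with ξ hξ
  simpa using hξ

lemma aux_zero {u : E → ℝ} (hu : MemLp u 2 (volume : Measure E))
    (h : (𝓕 ((aux_ofReal hu).toLp _) : Lp ℂ 2 (volume : Measure E)) =ᵐ[volume] 0) :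
    u =ᵐ[volume] 0 := by
  have h1 : (𝓕 ((aux_ofReal hu).toLp _) : Lp ℂ 2 (volume : Measure E)) = 0 :=
    (Lp.eq_zero_iff_ae_eq_zero).2 h
  have h2 : ((aux_ofReal hu).toLp _ : Lp ℂ 2 (volume : Measure E)) = 0 := by
    rw [← norm_eq_zero, ← Lp.norm_fourier_eq, h1, norm_zero]
  have h3 := (Lp.eq_zero_iff_ae_eq_zero).1 h2
  filter_upwards [h3, (aux_ofReal hu).coeFn_toLp] with x h4 h5
  rw [h5] at h4
  simpa using h4

end Fou

section Euc
variable {m : ℕ}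

lemma aux_coord (i : Fin m) : ∀ᵐ x ∂(volume : Measure (EuclideanSpace ℝ (Fin m))), x i ≠ 0 := by
  have := Measure.addHaar_submodule (volume : Measure (EuclideanSpace ℝ (Fin m)))
    (LinearMap.ker (EuclideanSpace.proj i : EuclideanSpace ℝ (Fin m) →L[ℝ] ℝ).toLinearMap) (by
      intro h
      have h1 : EuclideanSpace.single i (1 : ℝ) ∈
        LinearMap.ker (EuclideanSpace.proj i : EuclideanSpace ℝ (Fin m) →L[ℝ] ℝ).toLinearMap := by
        rw [h]; trivial
      simp at h1)
  rw [ae_iff]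
  convert this using 2
  ext x; simp

lemma aux_fub (i : Fin m) {a b : EuclideanSpace ℝ (Fin m) → ℂ} (ha : Measurable a)
    (hb : Measurable b)
    (h : ∀ y : EuclideanSpace ℝ (Fin m), 1 + y i ≠ 0 →
      ∀ᵐ ξ ∂(volume : Measure (EuclideanSpace ℝ (Fin m))), a ξ = 0 ∨ b (ξ + ξ i • y) = 0) :
    a =ᵐ[volume] 0 ∨ b =ᵐ[volume] 0 := by
  have h1 : ∀ᵐ y ∂(volume : Measure (EuclideanSpace ℝ (Fin m))), 1 + y i ≠ 0 := by
    filter_upwards [aux_ae_aff (ContinuousLinearEquiv.refl ℝ _) (-EuclideanSpace.single i (1 : ℝ))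
      (aux_coord i)] with y hy
    simpa [add_comm] using hy
  have h2 : ∀ᵐ y ∂(volume : Measure (EuclideanSpace ℝ (Fin m))),
      ∀ᵐ ξ ∂(volume : Measure (EuclideanSpace ℝ (Fin m))), a ξ = 0 ∨ b (ξ + ξ i • y) = 0 := by
    filter_upwards [h1] with y hy using h y hy
  have hmeas : MeasurableSet {p : EuclideanSpace ℝ (Fin m) × EuclideanSpace ℝ (Fin m) |
      a p.2 = 0 ∨ b (p.2 + p.2 i • p.1) = 0} := by
    apply MeasurableSet.union
    · exact (ha.comp measurable_snd) (measurableSet_singleton 0)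
    · exact (hb.comp (g := b) (f := fun p : EuclideanSpace ℝ (Fin m) × EuclideanSpace ℝ (Fin m) =>
        p.2 + p.2 i • p.1) (by fun_prop)) (measurableSet_singleton 0)
  have h3 := (Measure.ae_ae_comm hmeas).1 h2
  by_cases hz : a =ᵐ[volume] 0
  · exact Or.inl hz
  right
  have hfreq : ∃ᶠ ξ in ae (volume : Measure (EuclideanSpace ℝ (Fin m))), ¬ a ξ = 0 := by
    exact Filter.not_eventually.1 hz
  obtain ⟨ξ, hξ, hξ2, hξ3⟩ := (hfreq.and_eventually (h3.and (aux_coord i))).exists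
  have h4 := aux_ae_aff (ContinuousLinearEquiv.smulLeft (Units.mk0 (ξ i) hξ3)⁻¹) ξ hξ2
  filter_upwards [h4] with z hz
  have hz := hz.resolve_left hξ
  have e : ξ + ξ i • ((ContinuousLinearEquiv.smulLeft (Units.mk0 (ξ i) hξ3)⁻¹ :
      EuclideanSpace ℝ (Fin m) ≃L[ℝ] EuclideanSpace ℝ (Fin m)) (z - ξ)) = z := by
    have : ((ContinuousLinearEquiv.smulLeft (Units.mk0 (ξ i) hξ3)⁻¹ :
      EuclideanSpace ℝ (Fin m) ≃L[ℝ] EuclideanSpace ℝ (Fin m)) (z - ξ)) = (ξ i)⁻¹ • (z - ξ) := rfl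
    rw [this, smul_inv_smul₀ hξ3]; abel
  rw [e] at hz
  exact hz

/-- linear equivalence attached to an invertible matrix -/
noncomputable def auxGL (L : GL (Fin m) ℝ) :
    EuclideanSpace ℝ (Fin m) ≃L[ℝ] EuclideanSpace ℝ (Fin m) :=
  (LinearEquiv.ofLinearMap (Matrix.toEuclideanLin (L : Matrix (Fin m) (Fin m) ℝ))
    (Matrix.toEuclideanLin ((L⁻¹ : GL (Fin m) ℝ) : Matrix (Fin m) (Fin m) ℝ))
    (by
      ext x i
      simp [Matrix.toLpLin_apply])
    (by
      ext x i
      simp [Matrix.toLpLin_apply])).toContinuousLinearEquiv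

lemma auxGL_apply (L : GL (Fin m) ℝ) (x : EuclideanSpace ℝ (Fin m)) :
    auxGL L x = Matrix.toEuclideanLin (L : Matrix (Fin m) (Fin m) ℝ) x := rfl

lemma auxGL_symm_apply (L : GL (Fin m) ℝ) (x : EuclideanSpace ℝ (Fin m)) :
    (auxGL L).symm x =
      Matrix.toEuclideanLin ((L⁻¹ : GL (Fin m) ℝ) : Matrix (Fin m) (Fin m) ℝ) x := rfl

lemma aux_exists (i : Fin m) (y : EuclideanSpace ℝ (Fin m)) (hy : 1 + y i ≠ 0) :
    ∃ (L L' : GL (Fin m) ℝ), (∀ x z, ⟪auxGL L x, z⟫_ℝ = ⟪x, auxGL L' z⟫_ℝ) ∧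
      ∀ ξ, auxGL L' ξ = ξ + ξ i • y := by
  have hdet : ((1 : Matrix (Fin m) (Fin m) ℝ) + Matrix.replicateCol Unit (y.ofLp) *
      Matrix.replicateRow Unit (Pi.single i (1 : ℝ))).det ≠ 0 := by
    rw [Matrix.det_one_add_replicateCol_mul_replicateRow]; simpa using hy
  set M := ((1 : Matrix (Fin m) (Fin m) ℝ) + Matrix.replicateCol Unit (y.ofLp) *
      Matrix.replicateRow Unit (Pi.single i (1 : ℝ))) with hM
  refine ⟨Matrix.GeneralLinearGroup.mkOfDetNeZero Mᵀ (by rwa [Matrix.det_transpose]),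
    Matrix.GeneralLinearGroup.mkOfDetNeZero M hdet, ?_, ?_⟩
  · intro x z
    rw [auxGL_apply, auxGL_apply]
    simp only [Matrix.GeneralLinearGroup.mkOfDetNeZero]
    rw [← LinearMap.adjoint_inner_left, ← Matrix.toEuclideanLin_conjTranspose_eq_adjoint]
    rfl
  · intro ξ
    rw [auxGL_apply]
    change Matrix.toEuclideanLin M ξ = _
    ext j
    simp [hM, Matrix.toLpLin_apply, Matrix.mulVec, dotProduct, Matrix.mul_apply, Pi.single_apply, mul_comm]

end Euc

lemma aux_QD {m : ℕ} (i j : Fin m) : ∃ Q Q' : Matrix (Fin m) (Fin m) ℝ,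
    Q ∈ Matrix.orthogonalGroup (Fin m) ℝ ∧ Q' ∈ Matrix.orthogonalGroup (Fin m) ℝ ∧
    ∀ a b : EuclideanSpace ℝ (Fin m),
      ⟪a, Matrix.toEuclideanLin Q b⟫_ℝ - ⟪a, Matrix.toEuclideanLin Q' b⟫_ℝ = 2 * (a i * b j) := by
  set P : Matrix (Fin m) (Fin m) ℝ := (Equiv.swap i j).permMatrix ℝ with hP
  set D : Matrix (Fin m) (Fin m) ℝ := Matrix.diagonal (fun k => if k = i then -1 else 1) with hD
  have hPo : P ∈ Matrix.orthogonalGroup (Fin m) ℝ := by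
    rw [Matrix.mem_orthogonalGroup_iff, hP,
      Matrix.transpose_permMatrix, ← Matrix.permMatrix_mul]
    simp
  have hDo : D ∈ Matrix.orthogonalGroup (Fin m) ℝ := by
    rw [Matrix.mem_orthogonalGroup_iff, hD,
      Matrix.diagonal_transpose, Matrix.diagonal_mul_diagonal, ← Matrix.diagonal_one]
    congr 1; ext k; by_cases hk : k = i <;> simp [hk]
  refine ⟨P, D * P, hPo, mul_mem hDo hPo, fun a b => ?_⟩
  rw [← inner_sub_right]
  have : Matrix.toEuclideanLin P b - Matrix.toEuclideanLin (D * P) b =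
      (2 * b j) • EuclideanSpace.single i (1 : ℝ) := by
    ext k
    have h1 : (P *ᵥ b.ofLp) = fun k => b (Equiv.swap i j k) := by
      ext k; simp [hP, Matrix.permMatrix_mulVec]
    simp only [Matrix.toLpLin_apply, ← Matrix.mulVec_mulVec, h1, hD, PiLp.sub_apply,
      Matrix.mulVec_diagonal, PiLp.smul_apply, smul_eq_mul]
    by_cases hk : k = i
    · subst hk; simp; ring
    · simp [hk]
  rw [this, inner_smul_right]
  simp [EuclideanSpace.inner_single_right]
  ring

lemma aux_nonzero {m : ℕ} (f : Lp (EuclideanSpace ℝ (Fin m)) 2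
      (volume : Measure (EuclideanSpace ℝ (Fin m)))) (hf : f ≠ 0) :
    ∃ i, ¬ ((fun x => f x i) =ᵐ[volume] 0) := by
  by_contra! h
  apply hf
  rw [Lp.eq_zero_iff_ae_eq_zero]
  filter_upwards [ae_all_iff.2 h] with x hx
  ext i
  exact hx i


/-- Let `G = O(m) × Aff(m)` act on `L²(ℝᵐ; ℝᵐ)` by
`π_{(Q,L,t)}[f](x) = |det L|^{-1/2} Q f(L⁻¹(x - t))`.  Then `π` is irreducible: its only
closed invariant subspaces are `{0}` and `L²(ℝᵐ; ℝᵐ)`. -/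
theorem statement11 (m : ℕ)
    (V : Submodule ℝ (Lp (EuclideanSpace ℝ (Fin m)) 2
      (volume : Measure (EuclideanSpace ℝ (Fin m)))))
    (hclosed : IsClosed (V : Set (Lp (EuclideanSpace ℝ (Fin m)) 2
      (volume : Measure (EuclideanSpace ℝ (Fin m))))))
    (hinv : ∀ (Q : Matrix (Fin m) (Fin m) ℝ), Q ∈ Matrix.orthogonalGroup (Fin m) ℝ →
      ∀ (L : GL (Fin m) ℝ) (t : EuclideanSpace ℝ (Fin m))
        (f h : Lp (EuclideanSpace ℝ (Fin m)) 2
          (volume : Measure (EuclideanSpace ℝ (Fin m)))), f ∈ V →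
      (⇑h =ᵐ[volume] fun x =>
        (|((↑L : Matrix (Fin m) (Fin m) ℝ)).det| ^ (-(1 / 2 : ℝ)) : ℝ) •
          Matrix.toEuclideanLin Q
            (f (Matrix.toEuclideanLin (↑L⁻¹ : Matrix (Fin m) (Fin m) ℝ) (x - t)))) →
      h ∈ V) :
    V = ⊥ ∨ V = ⊤ := by
  by_contra! hcon
  obtain ⟨hbot, htop⟩ := hcon
  obtain ⟨f, hfV, hf0⟩ := V.ne_bot_iff.1 hbot
  have : CompleteSpace V := hclosed.completeSpace_coe
  have hperp : Vᗮ ≠ ⊥ := by rwa [ne_eq, Submodule.orthogonal_eq_bot_iff]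
  obtain ⟨g, hgV, hg0⟩ := Vᗮ.ne_bot_iff.1 hperp
  obtain ⟨j, hj⟩ := aux_nonzero f hf0
  obtain ⟨i, hi⟩ := aux_nonzero g hg0
  have hu : MemLp (fun x => g x i) 2 volume :=
    (EuclideanSpace.proj i : EuclideanSpace ℝ (Fin m) →L[ℝ] ℝ).comp_memLp' (Lp.memLp g)
  have hv : MemLp (fun x => f x j) 2 volume :=
    (EuclideanSpace.proj j : EuclideanSpace ℝ (Fin m) →L[ℝ] ℝ).comp_memLp' (Lp.memLp f)
  obtain ⟨Q, Q', hQ, hQ', hQQ⟩ := aux_QD i j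
  have hmem : ∀ (R : Matrix (Fin m) (Fin m) ℝ) (L : GL (Fin m) ℝ)
      (t : EuclideanSpace ℝ (Fin m)),
      MemLp (fun x => Matrix.toEuclideanLin R (f ((auxGL L).symm (x - t)))) 2 volume := by
    intro R L t
    exact (LinearMap.toContinuousLinearMap (Matrix.toEuclideanLin R)).comp_memLp'
      (aux_memLp_aff (auxGL L).symm t (Lp.memLp f))
  have hint : ∀ (R : Matrix (Fin m) (Fin m) ℝ) (L : GL (Fin m) ℝ)
      (t : EuclideanSpace ℝ (Fin m)),
      Integrable (fun x => ⟪g x, Matrix.toEuclideanLin R (f ((auxGL L).symm (x - t)))⟫_ℝ)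
        volume := by
    intro R L t
    refine (L2.integrable_inner (𝕜 := ℝ) g ((hmem R L t).toLp _)).congr ?_
    filter_upwards [(hmem R L t).coeFn_toLp] with x hx
    rw [hx]
  have horth : ∀ R ∈ Matrix.orthogonalGroup (Fin m) ℝ, ∀ (L : GL (Fin m) ℝ)
      (t : EuclideanSpace ℝ (Fin m)),
      ∫ x, ⟪g x, Matrix.toEuclideanLin R (f ((auxGL L).symm (x - t)))⟫_ℝ = 0 := by
    intro R hR L t
    set c : ℝ := |((↑L : Matrix (Fin m) (Fin m) ℝ)).det| ^ (-(1 / 2 : ℝ)) with hc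
    have hdet : ((↑L : Matrix (Fin m) (Fin m) ℝ)).det ≠ 0 :=
      (Matrix.isUnits_det_units L).ne_zero
    have hc0 : c ≠ 0 := (Real.rpow_pos_of_pos (abs_pos.2 hdet) _).ne'
    have hm := (hmem R L t).const_smul c
    have hV : hm.toLp _ ∈ V := hinv R hR L t f _ hfV hm.coeFn_toLp
    have h0 : ⟪g, hm.toLp _⟫_ℝ = 0 := Submodule.inner_left_of_mem_orthogonal hV hgV
    rw [L2.inner_def] at h0
    have h1 : ∫ x, ⟪g x, (hm.toLp _) x⟫_ℝ =
        c * ∫ x, ⟪g x, Matrix.toEuclideanLin R (f ((auxGL L).symm (x - t)))⟫_ℝ := by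
      rw [← integral_const_mul]
      apply integral_congr_ae
      filter_upwards [hm.coeFn_toLp] with x hx
      rw [hx, Pi.smul_apply, inner_smul_right]
    rw [h1] at h0
    exact (mul_eq_zero.1 h0).resolve_left hc0
  have hsc : ∀ (L : GL (Fin m) ℝ) (t : EuclideanSpace ℝ (Fin m)),
      ∫ x, g x i * f ((auxGL L).symm (x - t)) j = 0 := by
    intro L t
    have h1 := integral_sub (hint Q L t) (hint Q' L t)
    rw [horth Q hQ L t, horth Q' hQ' L t] at h1
    simp only [hQQ, integral_const_mul] at h1
    simpa using h1
  rcases aux_fub i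
    (Lp.stronglyMeasurable (𝓕 ((aux_ofReal hu).toLp _) : Lp ℂ 2 volume)).measurable
    (Lp.stronglyMeasurable (𝓕 ((aux_ofReal hv).toLp _) : Lp ℂ 2 volume)).measurable
    (by
      intro y hy
      obtain ⟨L, L', hL, hL'⟩ := aux_exists i y hy
      have h1 := aux_scalar hu hv (auxGL L) (auxGL L') hL (hsc L)
      simpa only [hL'] using h1) with h | h
  · exact hi (aux_zero hu h)
  · exact hj (aux_zero hv h)
end
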